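/- For every integer i ≥ 1, ν₂(S(16i+4, 5)) = 2. -/

import Mathlib

/-- Stirling numbers of the second kind, via the recurrence
`S(n+1,k+1) = S(n,k) + (k+1)·S(n,k+1)`. -/
def stirling2 : ℕ → ℕ → ℕ
  | 0, 0 => 1
  | 0, _ + 1 => 0
  | _ + 1, 0 => 0
  | n + 1, k + 1 => stirling2 n k + (k + 1) * stirling2 n (k + 1)

/-!
In any ring, `k! * S(n, k)` is the `k`-th forward difference of `x ↦ x ^ n` at `0`, so it only
depends on the *function* `x ↦ x ^ n`. On `ZMod (2 ^ (m + 2))` with `m ≥ 1` the functions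
`x ↦ x ^ (n + 2 ^ m)` and `x ↦ x ^ n` agree once `n ≥ m + 2`: on units because `2 ^ m` is a multiple
of their order, elsewhere because both vanish. Hence `k! * S(n, k)` has period `2 ^ m` in `n` modulo
`2 ^ (m + 2)`. For `k = 5` and `m = 4`, dividing `5! = 8 * 15` out of the modulus `64` shows that
`S(n, 5)` has period `16` modulo `8`, and `S(20, 5) ≡ 4` modulo `8`.
-/

open Nat (stirlingSecond stirlingSecond_succ_succ factorial_succ)
open scoped Nat fwdDiff

theorem stirling2_eq_stirlingSecond (n k : ℕ) : stirling2 n k = stirlingSecond n k := by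
  fun_induction stirling2 n k with
  | case1 | case2 | case3 => simp
  | case4 n k ih₁ ih₂ => rw [ih₁, ih₂, stirlingSecond_succ_succ, add_comm]

section ForwardDifference

variable {R M : Type*} [Ring R] [AddCommGroup M] [Module R M]

theorem fwdDiff_id_smul (f : R → M) (h : R) :
    Δ_[h] (fun x ↦ x • f x) = (fun x ↦ x • Δ_[h] f x) + h • fun x ↦ f (x + h) := by
  ext x
  simp only [fwdDiff, Pi.add_apply, Pi.smul_apply, smul_sub, add_smul]
  abel

theorem fwdDiff_iter_succ_id_smul (f : R → M) (h y : R) (k : ℕ) :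
    Δ_[h] ^[k + 1] (fun x ↦ x • f x) y =
      y • Δ_[h] ^[k + 1] f y + (k + 1) • h • Δ_[h] ^[k] f (y + h) := by
  induction k generalizing f with
  | zero => simp [fwdDiff_id_smul]
  | succ k ih =>
    rw [Function.iterate_succ_apply, fwdDiff_id_smul, fwdDiff_iter_add, Pi.add_apply, ih,
      fwdDiff_iter_const_smul, Pi.smul_apply, fwdDiff_iter_comp_add, ← Function.iterate_succ_apply,
      ← Function.iterate_succ_apply, succ_nsmul _ (k + 1), add_assoc]

end ForwardDifference

theorem factorial_mul_stirlingSecond (R : Type*) [Ring R] (n k : ℕ) :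
    (k ! * stirlingSecond n k : R) = Δ_[1] ^[k] (fun x : R ↦ x ^ n) 0 := by
  induction n generalizing k with
  | zero =>
    cases k with
    | zero => simp
    | succ k =>
      have iter_zero : Δ_[1] ^[k] (fun _ : R ↦ (0 : R)) = fun _ ↦ 0 :=
        Function.iterate_fixed (fwdDiff_const 1 0) k
      simp [iter_zero]
  | succ n ih =>
    cases k with
    | zero => simp
    | succ k =>
      have shift : Δ_[1] ^[k] (fun x : R ↦ x ^ n) (0 + 1) =
          Δ_[1] ^[k] (fun x : R ↦ x ^ n) 0 + Δ_[1] ^[k + 1] (fun x : R ↦ x ^ n) 0 := by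
        rw [Function.iterate_succ_apply', fwdDiff, add_sub_cancel]
      have pow_succ_eq_smul : (fun x : R ↦ x ^ (n + 1)) = fun x ↦ x • x ^ n :=
        funext fun x ↦ pow_succ' x n
      rw [pow_succ_eq_smul, fwdDiff_iter_succ_id_smul, shift, ← ih, ← ih, stirlingSecond_succ_succ,
        factorial_succ, zero_smul, zero_add, one_smul, nsmul_eq_mul]
      norm_cast
      congr 1
      ring

theorem factorial_mul_stirlingSecond_congr {R : Type*} [Ring R] {m n : ℕ}
    (h : ∀ x : R, x ^ m = x ^ n) (k : ℕ) :
    (k ! * stirlingSecond m k : R) = k ! * stirlingSecond n k := by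
  simp only [factorial_mul_stirlingSecond, h]

theorem two_pow_dvd_pow_two_pow_sub_one {a : ℤ} (ha : Odd a) {m : ℕ} (hm : 1 ≤ m) :
    2 ^ (m + 2) ∣ a ^ 2 ^ m - 1 := by
  induction m, hm using Nat.le_induction with
  | base => exact Int.eight_dvd_sq_sub_one_of_odd ha
  | succ m _ ih =>
    have two_dvd : 2 ∣ a ^ 2 ^ m + 1 := (ha.pow.add_odd odd_one).two_dvd
    have factor : a ^ 2 ^ (m + 1) - 1 = (a ^ 2 ^ m - 1) * (a ^ 2 ^ m + 1) := by ring
    rw [factor, show 2 ^ (m + 1 + 2) = (2 ^ (m + 2) * 2 : ℤ) by ring]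
    exact mul_dvd_mul ih two_dvd

theorem zmod_pow_add_two_pow {m n : ℕ} (hm : 1 ≤ m) (hn : m + 2 ≤ n)
    (x : ZMod (2 ^ (m + 2))) : x ^ (n + 2 ^ m) = x ^ n := by
  obtain ⟨a, rfl⟩ := ZMod.intCast_surjective x
  suffices h : (2 ^ (m + 2) : ℤ) ∣ a ^ n * (a ^ 2 ^ m - 1) by
    rw [← sub_eq_zero, pow_add _ n, ← mul_sub_one]
    exact_mod_cast (ZMod.intCast_zmod_eq_zero_iff_dvd _ _).2 (by exact_mod_cast h)
  rcases Int.even_or_odd a with ha | ha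
  · exact ((pow_dvd_pow 2 hn).trans (pow_dvd_pow_of_dvd ha.two_dvd n)).mul_right _
  · exact (two_pow_dvd_pow_two_pow_sub_one ha hm).mul_left _

theorem factorial_mul_stirlingSecond_add_two_pow_modEq {m n : ℕ} (hm : 1 ≤ m) (hn : m + 2 ≤ n)
    (k : ℕ) :
    k ! * stirlingSecond (n + 2 ^ m) k ≡ k ! * stirlingSecond n k [MOD 2 ^ (m + 2)] := by
  rw [← ZMod.natCast_eq_natCast_iff]
  push_cast
  exact factorial_mul_stirlingSecond_congr (zmod_pow_add_two_pow hm hn) k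

theorem stirlingSecond_add_sixteen_five_modEq {n : ℕ} (hn : 6 ≤ n) :
    stirlingSecond (n + 16) 5 ≡ stirlingSecond n 5 [MOD 8] := by
  have h : 8 * 15 * stirlingSecond (n + 16) 5 ≡ 8 * 15 * stirlingSecond n 5 [MOD 8 * 8] :=
    factorial_mul_stirlingSecond_add_two_pow_modEq (m := 4) (by decide) hn 5
  rw [mul_assoc, mul_assoc] at h
  exact (Nat.ModEq.mul_left_cancel' (by decide) h).cancel_left_of_coprime (by decide)

theorem stirlingSecond_sixteen_mul_add_four_five_modEq {i : ℕ} (hi : 1 ≤ i) :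
    stirlingSecond (16 * i + 4) 5 ≡ 4 [MOD 8] := by
  induction i, hi using Nat.le_induction with
  | base => decide +kernel
  | succ i _ ih => exact (stirlingSecond_add_sixteen_five_modEq (by lia)).trans ih

/-- For i ≥ 1, ν₂(S(16i+4,5)) = 2. -/
theorem nu2_stirling_five_16i4 (i : ℕ) (hi : 1 ≤ i) :
    padicValNat 2 (stirling2 (16 * i + 4) 5) = 2 := by
  have h : stirlingSecond (16 * i + 4) 5 % 8 = 4 :=
    stirlingSecond_sixteen_mul_add_four_five_modEq hi
  rw [stirling2_eq_stirlingSecond, padicValNat_def (by lia)]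
  exact multiplicity_eq_of_dvd_of_not_dvd (by lia) (by lia)
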